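/- Let A(B)^H be a cleft Hopf Galois extension with convolution invertible total integral f: H → A. Then the quotient space A_B = A/[A,B], with the coaction induced from the original right H-coaction and the left H-action h·a = f(h(2)) a f^{-1}(h(1)), is a left-right stable anti Yetter–Drinfeld module over H. -/

import Mathlib

open TensorProduct LinearMap

noncomputable section

variable {k H A M : Type*} [Field k] [Ring H] [HopfAlgebra k H]
  [Ring A] [Algebra k A] [AddCommGroup M] [Module k M]

local notation "Δ" => (Coalgebra.comul (R := k) (A := H))
local notation "εH" => (Coalgebra.counit (R := k) (A := H))
local notation "𝒮" => (HopfAlgebra.antipode (R := k) (A := H))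
local notation "mulH" => (LinearMap.mul' k H)
local notation "mulA" => (LinearMap.mul' k A)

/-- Right-hand side of the right-right (anti) Yetter-Drinfeld compatibility:
`m ⊗ h ↦ act (m₍₀₎ ⊗ h⑵) ⊗ s h⑴ * m₍₁₎ * h⑶`, where the comultiplication of `H` is `Dh`,
its multiplication is `mH` and `s` plays the role of the (inverse of the) antipode. -/
def ydRhs (mH : H ⊗[k] H →ₗ[k] H) (Dh : H →ₗ[k] H ⊗[k] H) (s : H →ₗ[k] H)
    (act : M ⊗[k] H →ₗ[k] M) (ρM : M →ₗ[k] M ⊗[k] H) : M ⊗[k] H →ₗ[k] M ⊗[k] H :=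
  lTensor M (mH ∘ₗ TensorProduct.map s mH) ∘ₗ
  (TensorProduct.assoc k M H (H ⊗[k] H)).toLinearMap ∘ₗ
  rTensor (H ⊗[k] H) (rTensor H act ∘ₗ (TensorProduct.assoc k M H H).symm.toLinearMap ∘ₗ
      lTensor M (TensorProduct.comm k H H).toLinearMap) ∘ₗ
  (tensorTensorTensorComm k M H (H ⊗[k] H) H).toLinearMap ∘ₗ
  TensorProduct.map ρM (rTensor H Dh ∘ₗ Dh)

/-- Right-hand side of the left-right anti-Yetter-Drinfeld compatibility:
`h ⊗ m ↦ act (h⑵ ⊗ m₍₀₎) ⊗ h⑶ * m₍₁₎ * s h⑴`. -/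
def aydLRRhs (mH : H ⊗[k] H →ₗ[k] H) (Dh : H →ₗ[k] H ⊗[k] H) (s : H →ₗ[k] H)
    (act : H ⊗[k] M →ₗ[k] M) (ρM : M →ₗ[k] M ⊗[k] H) : H ⊗[k] M →ₗ[k] M ⊗[k] H :=
  TensorProduct.map act
      (mH ∘ₗ lTensor H mH ∘ₗ lTensor H (lTensor H s) ∘ₗ
        lTensor H (TensorProduct.comm k H H).toLinearMap ∘ₗ
        (TensorProduct.assoc k H H H).toLinearMap) ∘ₗ
  (tensorTensorTensorComm k H (H ⊗[k] H) M H).toLinearMap ∘ₗ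
  TensorProduct.map
    ((TensorProduct.assoc k H H H).toLinearMap ∘ₗ
      (TensorProduct.comm k H (H ⊗[k] H)).toLinearMap ∘ₗ lTensor H Dh ∘ₗ Dh) ρM

/-- Right-hand side of the right-left anti-Yetter-Drinfeld compatibility:
`m ⊗ h ↦ s h⑶ * m₍₋₁₎ * h⑴ ⊗ act (m₍₀₎ ⊗ h⑵)`. -/
def aydRLRhs (mH : H ⊗[k] H →ₗ[k] H) (Dh : H →ₗ[k] H ⊗[k] H) (s : H →ₗ[k] H)
    (act : M ⊗[k] H →ₗ[k] M) (lρ : M →ₗ[k] H ⊗[k] M) : M ⊗[k] H →ₗ[k] H ⊗[k] M :=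
  rTensor M (mH ∘ₗ (TensorProduct.comm k H H).toLinearMap ∘ₗ lTensor H s) ∘ₗ
  (TensorProduct.assoc k H H M).symm.toLinearMap ∘ₗ
  lTensor H (TensorProduct.comm k M H).toLinearMap ∘ₗ
  TensorProduct.map mH (rTensor H act ∘ₗ (TensorProduct.assoc k M H H).symm.toLinearMap) ∘ₗ
  (tensorTensorTensorComm k H M H (H ⊗[k] H)).toLinearMap ∘ₗ
  TensorProduct.map lρ (lTensor H Dh ∘ₗ Dh)

/-- `sandwich p q (a ⊗ (x ⊗ y)) = p x * a * q y`. -/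
def sandwich (p q : H →ₗ[k] A) : A ⊗[k] (H ⊗[k] H) →ₗ[k] A :=
  mulA ∘ₗ TensorProduct.map (mulA ∘ₗ TensorProduct.map p LinearMap.id) q ∘ₗ
    rTensor H (TensorProduct.comm k A H).toLinearMap ∘ₗ
    (TensorProduct.assoc k A H H).symm.toLinearMap

/-- The right `H`-action `a · h = g h⑴ * a * f h⑵` attached to a total integral `f` with
convolution inverse `g`. -/
def intAct (Dh : H →ₗ[k] H ⊗[k] H) (f g : H →ₗ[k] A) : A ⊗[k] H →ₗ[k] A :=
  sandwich g f ∘ₗ lTensor A Dh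

/-- The left `H`-action `h · a = f h⑵ * a * g h⑴`. -/
def intActL (Dh : H →ₗ[k] H ⊗[k] H) (f g : H →ₗ[k] A) : H ⊗[k] A →ₗ[k] A :=
  sandwich f g ∘ₗ lTensor A ((TensorProduct.comm k H H).toLinearMap ∘ₗ Dh) ∘ₗ
    (TensorProduct.comm k H A).toLinearMap

/-- The set of coinvariants `B = {a | ρ a = a ⊗ 1}`. -/
def coinv (ρA : A →ₗ[k] A ⊗[k] H) : Set A := {a : A | ρA a = a ⊗ₜ[k] (1 : H)}

/-- The canonical Galois map `A ⊗ A → A ⊗ H`, `a ⊗ a' ↦ a * a'₍₀₎ ⊗ a'₍₁₎`. -/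
def canMap (ρA : A →ₗ[k] A ⊗[k] H) : A ⊗[k] A →ₗ[k] A ⊗[k] H :=
  rTensor H mulA ∘ₗ (TensorProduct.assoc k A A H).symm.toLinearMap ∘ₗ lTensor A ρA

/-- The kernel of `A ⊗ A → A ⊗_B A`: the span of the elements `(a*b) ⊗ a' - a ⊗ (b*a')`
with `b` a coinvariant; so `A ⊗_B A = (A ⊗ A) ⧸ galRel ρA`. -/
def galRel (ρA : A →ₗ[k] A ⊗[k] H) : Submodule k (A ⊗[k] A) :=
  Submodule.span k {x : A ⊗[k] A |
    ∃ a a' b : A, b ∈ coinv ρA ∧ x = (a * b) ⊗ₜ[k] a' - a ⊗ₜ[k] (b * a')}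

/-- The span of the commutators `[A, B]`, `B` the coinvariants; `A_B = A ⧸ commSub ρA`. -/
def commSub (ρA : A →ₗ[k] A ⊗[k] H) : Submodule k A :=
  Submodule.span k {x : A | ∃ a b : A, b ∈ coinv ρA ∧ x = a * b - b * a}

/-- `δ(h⑴) • s h⑵`, the twisted antipode. -/
def twistS (δl : H →ₗ[k] k) (s : H →ₗ[k] H) (Dh : H →ₗ[k] H ⊗[k] H) : H →ₗ[k] H :=
  (TensorProduct.lid k H).toLinearMap ∘ₗ TensorProduct.map δl s ∘ₗ Dh

/-!
All computations take place in convolution algebras. Let `g` be the convolution inverse of `f`.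
Colinearity of `f` reads `ρ ∘ f = (f ⊗ 1) * (1 ⊗ id)`, so `ρ ∘ g = (1 ⊗ S) * (g ⊗ 1)`. It follows
that the elements `f(x₁) b g(x₂)` with `b` coinvariant, the values `f(x₁) f(y₁) g(x₂ y₂)` of the
cocycle and the elements `a₀ g(a₁)` are coinvariant. In `A_B` they may therefore be moved cyclically
past any element of `A`, and the convolution factor `f * g` or `g * f` so created cancels. This
proves in turn that the action descends to `A_B`, that it is associative there, and that it is
stable. The anti-Yetter–Drinfeld identity holds already on `A`: apply `ρ` to `f(x₂) a g(x₁)`.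
-/

section Convolution

open WithConv Coalgebra

variable {R C C' D D' : Type*} [CommSemiring R]
  [AddCommMonoid C] [Module R C] [Coalgebra R C]
  [AddCommMonoid C'] [Module R C'] [Coalgebra R C']
  [Semiring D] [Algebra R D] [Semiring D'] [Algebra R D']

/-- Postcomposition with an algebra map, as a homomorphism of convolution monoids. -/
def convPush (h : D →ₐ[R] D') : WithConv (C →ₗ[R] D) →* WithConv (C →ₗ[R] D') where
  toFun φ := toConv (h.toLinearMap ∘ₗ φ.ofConv)
  map_one' := by ext c; simp
  map_mul' φ ψ := by rw [algHom_comp_convMul_distrib]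

/-- Precomposition with a coalgebra map, as a homomorphism of convolution monoids. -/
def convPull (p : C' →ₗc[R] C) : WithConv (C →ₗ[R] D) →* WithConv (C' →ₗ[R] D) where
  toFun φ := toConv (φ.ofConv ∘ₗ p.toLinearMap)
  map_one' := by ext c; simp
  map_mul' φ ψ := by rw [convMul_comp_coalgHom_distrib]

@[simp]
lemma convPush_apply (h : D →ₐ[R] D') (φ : WithConv (C →ₗ[R] D)) (c : C) :
    convPush h φ c = h (φ c) := rfl

@[simp]
lemma convPull_apply (p : C' →ₗc[R] C) (φ : WithConv (C →ₗ[R] D)) (c : C') :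
    convPull p φ c = φ (p c) := rfl

lemma convPush_convPull (h : D →ₐ[R] D') (p : C' →ₗc[R] C) (φ : WithConv (C →ₗ[R] D)) :
    convPush h (convPull p φ) = convPull p (convPush h φ) := rfl

variable (R) in
/-- The map `c ↦ ε(c) d`, as a homomorphism from `D` to the convolution monoid. -/
def convConst (C : Type*) [AddCommMonoid C] [Module R C] [Coalgebra R C] :
    D →* WithConv (C →ₗ[R] D) where
  toFun d := toConv (toSpanSingleton R D d ∘ₗ counit)
  map_one' := by ext c; simp [Algebra.algebraMap_eq_smul_one]
  map_mul' a b := by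
    ext c
    rw [(ℛ R c).convMul_apply]
    nth_rw 1 [← sum_counit_smul (ℛ R c)]
    simp [smul_smul, mul_comm]

@[simp]
lemma convConst_apply (d : D) (c : C) :
    convConst R C d c = counit (R := R) c • d := rfl

@[simp]
lemma mul_convConst_apply (φ : WithConv (C →ₗ[R] D)) (d : D) (c : C) :
    (φ * convConst R C d) c = φ c * d :=
  calc (φ * convConst R C d) c = (φ * 1) c * d := by
        rw [(ℛ R c).convMul_apply, (ℛ R c).convMul_apply, Finset.sum_mul]
        simp [Algebra.algebraMap_eq_smul_one]
    _ = φ c * d := by rw [mul_one]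

@[simp]
lemma convConst_mul_apply (d : D) (φ : WithConv (C →ₗ[R] D)) (c : C) :
    (convConst R C d * φ) c = d * φ c :=
  calc (convConst R C d * φ) c = d * (1 * φ) c := by
        rw [(ℛ R c).convMul_apply, (ℛ R c).convMul_apply, Finset.mul_sum]
        simp [Algebra.algebraMap_eq_smul_one]
    _ = d * φ c := by rw [one_mul]

lemma convPush_convConst (h : D →ₐ[R] D') (d : D) :
    convPush h (convConst R C d) = convConst R C (h d) := by
  ext c; simp [convPush, convConst]

lemma commute_convConst {φ : WithConv (C →ₗ[R] D)} {d : D} (h : ∀ c, Commute (φ c) d) :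
    Commute φ (convConst R C d) := by
  ext c
  exact (mul_convConst_apply φ d c).trans ((h c).eq.trans (convConst_mul_apply d φ c).symm)

/-- The map `x ⊗ y ↦ φ(x) ε(y)`, as a homomorphism of convolution monoids. -/
def convFst (C' : Type*) [AddCommMonoid C'] [Module R C'] [Coalgebra R C'] :
    WithConv (C →ₗ[R] D) →* WithConv (C ⊗[R] C' →ₗ[R] D) :=
  convPull ((Coalgebra.TensorProduct.rid R R C).toCoalgHom.comp
    (Coalgebra.TensorProduct.map (CoalgHom.id R C) (counitCoalgHom R C')))

/-- The map `x ⊗ y ↦ ε(x) ψ(y)`, as a homomorphism of convolution monoids. -/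
def convSnd (C : Type*) [AddCommMonoid C] [Module R C] [Coalgebra R C] :
    WithConv (C' →ₗ[R] D) →* WithConv (C ⊗[R] C' →ₗ[R] D) :=
  convPull ((Coalgebra.TensorProduct.lid R C').toCoalgHom.comp
    (Coalgebra.TensorProduct.map (counitCoalgHom R C) (CoalgHom.id R C')))

@[simp]
lemma convFst_tmul (φ : WithConv (C →ₗ[R] D)) (x : C) (y : C') :
    convFst C' φ (x ⊗ₜ[R] y) = counit (R := R) y • φ x :=
  map_smul φ.ofConv _ _

@[simp]
lemma convSnd_tmul (ψ : WithConv (C' →ₗ[R] D)) (x : C) (y : C') :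
    convSnd C ψ (x ⊗ₜ[R] y) = counit (R := R) x • ψ y :=
  map_smul ψ.ofConv _ _

lemma convFst_mul_convSnd_tmul (φ : WithConv (C →ₗ[R] D)) (ψ : WithConv (C' →ₗ[R] D))
    (x : C) (y : C') :
    (convFst C' φ * convSnd C ψ) (x ⊗ₜ[R] y) = φ x * ψ y :=
  calc (convFst C' φ * convSnd C ψ) (x ⊗ₜ[R] y) = (φ * 1) x * (1 * ψ) y := by
        simp only [convMul_apply, TensorProduct.comul_tmul]
        hopf_tensor_induction comul (R := R) x with x₁ x₂
        hopf_tensor_induction comul (R := R) y with y₁ y₂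
        simp [Algebra.algebraMap_eq_smul_one, smul_smul, mul_comm]
    _ = φ x * ψ y := by rw [mul_one, one_mul]

lemma convSnd_mul_convFst_tmul (φ : WithConv (C →ₗ[R] D)) (ψ : WithConv (C' →ₗ[R] D))
    (x : C) (y : C') :
    (convSnd C ψ * convFst C' φ) (x ⊗ₜ[R] y) = ψ y * φ x :=
  calc (convSnd C ψ * convFst C' φ) (x ⊗ₜ[R] y) = (ψ * 1) y * (1 * φ) x := by
        simp only [convMul_apply, TensorProduct.comul_tmul]
        hopf_tensor_induction comul (R := R) x with x₁ x₂
        hopf_tensor_induction comul (R := R) y with y₁ y₂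
        simp [Algebra.algebraMap_eq_smul_one, smul_smul, mul_comm (counit (R := R) y₂)]
    _ = ψ y * φ x := by rw [mul_one, one_mul]

lemma commute_convFst_convSnd {φ : WithConv (C →ₗ[R] D)} {ψ : WithConv (C' →ₗ[R] D)}
    (h : ∀ x y, Commute (φ x) (ψ y)) : Commute (convFst C' φ) (convSnd C ψ) := by
  refine WithConv.ofConv_injective (TensorProduct.ext' fun x y ↦ ?_)
  exact (convFst_mul_convSnd_tmul φ ψ x y).trans
    ((h x y).eq.trans (convSnd_mul_convFst_tmul φ ψ x y).symm)

lemma mul_convPush_inv {α β : D →ₐ[R] D'} {v w : WithConv (C →ₗ[R] D)}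
    {t : WithConv (C →ₗ[R] D')} (hv : convPush α v = convPush β v * t)
    (hvw : v * w = 1) (hwv : w * v = 1) : t * convPush α w = convPush β w :=
  calc t * convPush α w = convPush β w * (convPush β v * t) * convPush α w := by
        rw [← mul_assoc (convPush β w), ← map_mul, hwv, map_one, one_mul]
    _ = convPush β w := by rw [← hv, mul_assoc, ← map_mul, hvw, map_one, mul_one]

lemma convPush_mul_inv_eq {α β : D →ₐ[R] D'} {u v w : WithConv (C →ₗ[R] D)}
    {t : WithConv (C →ₗ[R] D')} (hv : convPush α v = convPush β v * t)
    (hvw : v * w = 1) (hwv : w * v = 1) (hu : convPush α u = convPush β u * t) :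
    convPush α (u * w) = convPush β (u * w) := by
  rw [map_mul, hu, mul_assoc, mul_convPush_inv hv hvw hwv, map_mul]

section ConvAct

variable {V : Type*} [AddCommMonoid V] [Module R V]

/-- The map `v ↦ u(v₀) φ(v₁)`, where `δ(v) = v₀ ⊗ v₁`: the action of the convolution algebra of a
coalgebra on the algebra-valued maps out of a right comodule. -/
def convAct (δ : V →ₗ[R] V ⊗[R] C) (u : V →ₗ[R] D) (φ : WithConv (C →ₗ[R] D)) : V →ₗ[R] D :=
  mul' R D ∘ₗ TensorProduct.map u φ.ofConv ∘ₗ δ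

lemma convAct_convAct {δ : V →ₗ[R] V ⊗[R] C}
    (hδ : (TensorProduct.assoc R V C C).toLinearMap ∘ₗ rTensor C δ ∘ₗ δ = lTensor V comul ∘ₗ δ)
    (u : V →ₗ[R] D) (φ ψ : WithConv (C →ₗ[R] D)) :
    convAct δ (convAct δ u φ) ψ = convAct δ u (φ * ψ) := by
  have hassoc : mul' R D ∘ₗ TensorProduct.map (mul' R D ∘ₗ TensorProduct.map u φ.ofConv) ψ.ofConv =
      mul' R D ∘ₗ TensorProduct.map u (mul' R D ∘ₗ TensorProduct.map φ.ofConv ψ.ofConv) ∘ₗ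
        (TensorProduct.assoc R V C C).toLinearMap := by
    ext; simp [mul_assoc]
  calc convAct δ (convAct δ u φ) ψ
      = (mul' R D ∘ₗ TensorProduct.map (mul' R D ∘ₗ TensorProduct.map u φ.ofConv) ψ.ofConv) ∘ₗ
          rTensor C δ ∘ₗ δ := by
        ext v
        simp only [convAct, comp_apply]
        hopf_tensor_induction δ v with x y
        simp
    _ = (mul' R D ∘ₗ TensorProduct.map u (mul' R D ∘ₗ TensorProduct.map φ.ofConv ψ.ofConv)) ∘ₗ
          lTensor V comul ∘ₗ δ := by rw [hassoc, ← hδ]; rfl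
    _ = convAct δ u (φ * ψ) := by
        ext v
        simp only [convAct, comp_apply]
        hopf_tensor_induction δ v with x y
        simp [LinearMap.convMul_def]

lemma convAct_one {δ : V →ₗ[R] V ⊗[R] C}
    (hδ : (TensorProduct.rid R V).toLinearMap ∘ₗ lTensor V counit ∘ₗ δ = LinearMap.id)
    (u : V →ₗ[R] D) : convAct δ u 1 = u :=
  calc convAct δ u 1
      = u ∘ₗ (TensorProduct.rid R V).toLinearMap ∘ₗ lTensor V counit ∘ₗ δ := by
        ext v
        simp only [convAct, comp_apply]
        hopf_tensor_induction δ v with x y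
        simp [Algebra.algebraMap_eq_smul_one]
    _ = u := by rw [hδ, LinearMap.comp_id]

lemma algHom_comp_convAct (h : D →ₐ[R] D') (δ : V →ₗ[R] V ⊗[R] C) (u : V →ₗ[R] D)
    (φ : WithConv (C →ₗ[R] D)) :
    h.toLinearMap ∘ₗ convAct δ u φ = convAct δ (h.toLinearMap ∘ₗ u) (convPush h φ) := by
  ext v
  simp only [convAct, comp_apply]
  hopf_tensor_induction δ v with x y
  simp [convPush]

lemma algHom_comp_convAct_inv_eq {δ : V →ₗ[R] V ⊗[R] C}
    (hδ : (TensorProduct.assoc R V C C).toLinearMap ∘ₗ rTensor C δ ∘ₗ δ = lTensor V comul ∘ₗ δ)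
    {α β : D →ₐ[R] D'} {u : V →ₗ[R] D} {v w : WithConv (C →ₗ[R] D)}
    {t : WithConv (C →ₗ[R] D')} (hv : convPush α v = convPush β v * t)
    (hvw : v * w = 1) (hwv : w * v = 1)
    (hu : α.toLinearMap ∘ₗ u = convAct δ (β.toLinearMap ∘ₗ u) t) :
    α.toLinearMap ∘ₗ convAct δ u w = β.toLinearMap ∘ₗ convAct δ u w := by
  rw [algHom_comp_convAct, algHom_comp_convAct, hu, convAct_convAct hδ,
    mul_convPush_inv hv hvw hwv]

end ConvAct

section Sandwich

open Algebra.TensorProduct (includeLeft includeRight)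

/-- The map `c ↦ (a ↦ φ(c) a)`. -/
def convLeft (φ : WithConv (C →ₗ[R] D)) : WithConv (C →ₗ[R] Module.End R D) :=
  convPush (Algebra.lmul R D) φ

/-- The map `c ↦ (a ↦ a ψ(c))`. -/
def convRight (ψ : WithConv (C →ₗ[R] D)) : WithConv (C →ₗ[R] Module.End R D) :=
  toConv ((LinearMap.mul R D).flip ∘ₗ ψ.ofConv)

/-- The map `c ↦ (a ↦ φ(c₂) a ψ(c₁))`. -/
def convSandwich (ψ φ : WithConv (C →ₗ[R] D)) : WithConv (C →ₗ[R] Module.End R D) :=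
  convRight ψ * convLeft φ

@[simp]
lemma convLeft_apply (φ : WithConv (C →ₗ[R] D)) (c : C) (a : D) : convLeft φ c a = φ c * a := rfl

omit [Coalgebra R C] in
@[simp]
lemma convRight_apply (ψ : WithConv (C →ₗ[R] D)) (c : C) (a : D) : convRight ψ c a = a * ψ c := rfl

lemma convLeft_mul (φ φ' : WithConv (C →ₗ[R] D)) :
    convLeft (φ * φ') = convLeft φ * convLeft φ' :=
  map_mul _ _ _

lemma convSandwich_apply (ψ φ : WithConv (C →ₗ[R] D)) {ι : Type*} {c : C} (r : Repr R c ι) (a : D) :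
    convSandwich ψ φ c a = ∑ i ∈ r.index, φ (r.right i) * a * ψ (r.left i) := by
  rw [convSandwich, r.convMul_apply, LinearMap.sum_apply]; rfl

omit [Coalgebra R C] in
lemma commute_convRight_convLeft (ψ : WithConv (C →ₗ[R] D)) (φ : WithConv (C' →ₗ[R] D))
    (c : C) (c' : C') :
    Commute (convRight ψ c) (convLeft φ c') :=
  (commute_mulLeft_right (R := R) (φ c') (ψ c)).symm

lemma convRight_mul_of_commute {φ ψ : WithConv (C →ₗ[R] D)} (h : ∀ c c', Commute (φ c) (ψ c')) :
    convRight (φ * ψ) = convRight φ * convRight ψ := by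
  ext c a
  simp [(ℛ R c).convMul_apply, (h _ _).eq, Finset.mul_sum, mul_assoc]

lemma algHom_convSandwich_apply (h : D →ₐ[R] D') (ψ φ : WithConv (C →ₗ[R] D)) (c : C) (a : D) :
    h (convSandwich ψ φ c a) = convSandwich (convPush h ψ) (convPush h φ) c (h a) := by
  simp [convSandwich_apply _ _ (ℛ R c)]

lemma convSandwich_convPull (p : C' →ₗc[R] C) (ψ φ : WithConv (C →ₗ[R] D)) :
    convSandwich (convPull p ψ) (convPull p φ) = convPull p (convSandwich ψ φ) := by
  rw [convSandwich, convSandwich, map_mul]; rfl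

lemma convSandwich_mul_convConst (ψ φ : WithConv (C →ₗ[R] D)) (b a : D) (c : C) :
    convSandwich ψ (φ * convConst R C b) c a = convSandwich ψ φ c (b * a) := by
  simp only [convSandwich_apply _ _ (ℛ R c), mul_convConst_apply, mul_assoc]

lemma convSandwich_convConst_mul (ψ φ : WithConv (C →ₗ[R] D)) (b a : D) (c : C) :
    convSandwich (convConst R C b * ψ) φ c a = convSandwich ψ φ c (a * b) := by
  simp only [convSandwich_apply _ _ (ℛ R c), convConst_mul_apply, mul_assoc]

lemma convSandwich_convFst_convSnd_tmul (ψ φ : WithConv (C →ₗ[R] D)) (ψ' φ' : WithConv (C' →ₗ[R] D))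
    (x : C) (y : C') (a : D) :
    convSandwich (convSnd C ψ' * convFst C' ψ) (convFst C' φ * convSnd C φ') (x ⊗ₜ[R] y) a =
      convSandwich ψ φ x (convSandwich ψ' φ' y a) := by
  have hright : convRight (convSnd C ψ' * convFst C' ψ) =
      convFst C' (convRight ψ) * convSnd C (convRight ψ') := by
    refine ofConv_injective (TensorProduct.ext' fun x y ↦ LinearMap.ext fun a ↦ ?_)
    calc a * (convSnd C ψ' * convFst C' ψ) (x ⊗ₜ[R] y)
        = (convRight ψ x * convRight ψ' y) a := by
          rw [convSnd_mul_convFst_tmul, ← mul_assoc]; rfl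
      _ = _ := by rw [← convFst_mul_convSnd_tmul]
  have hcomm : Commute (convSnd C (convRight ψ')) (convFst C' (convLeft φ)) :=
    (commute_convFst_convSnd fun x y ↦ (commute_convRight_convLeft ψ' φ y x).symm).symm
  have hmul : convSandwich (convSnd C ψ' * convFst C' ψ) (convFst C' φ * convSnd C φ') =
      convFst C' (convSandwich ψ φ) * convSnd C (convSandwich ψ' φ') :=
    calc _ = convFst C' (convRight ψ) * convSnd C (convRight ψ') *
          (convFst C' (convLeft φ) * convSnd C (convLeft φ')) := by
          rw [convSandwich, hright, convLeft_mul]; rfl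
      _ = _ := by rw [hcomm.mul_mul_mul_comm, ← map_mul, ← map_mul]; rfl
  rw [hmul, convFst_mul_convSnd_tmul]; rfl

lemma lift_convSandwich_comm_coaction {δ : D →ₗ[R] D ⊗[R] C}
    (hδ : (TensorProduct.assoc R D C C).toLinearMap ∘ₗ rTensor C δ ∘ₗ δ = lTensor D comul ∘ₗ δ)
    (ψ φ : WithConv (C →ₗ[R] D)) (a : D) :
    TensorProduct.lift (convSandwich ψ φ).ofConv (TensorProduct.comm R D C (δ a)) =
      mul' R D (TensorProduct.comm R D D
        (TensorProduct.map (convAct δ LinearMap.id ψ) φ.ofConv (δ a))) := by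
  let T : D ⊗[R] (C ⊗[R] C) →ₗ[R] D := mul' R D ∘ₗ (TensorProduct.comm R D D).toLinearMap ∘ₗ
    TensorProduct.map (mul' R D ∘ₗ lTensor D ψ.ofConv) φ.ofConv ∘ₗ
    (TensorProduct.assoc R D C C).symm.toLinearMap
  have hsandwich (z : D ⊗[R] C) :
      TensorProduct.lift (convSandwich ψ φ).ofConv (TensorProduct.comm R D C z) =
        T (lTensor D comul z) := by
    hopf_tensor_induction z with x c
    simp [← (ℛ R c).eq, convSandwich_apply _ _ (ℛ R c), T, tmul_sum, mul_assoc]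
  have hconvAct (z : D ⊗[R] C) :
      T (TensorProduct.assoc R D C C (rTensor C δ z)) =
        mul' R D (TensorProduct.comm R D D
          (TensorProduct.map (convAct δ LinearMap.id ψ) φ.ofConv z)) := by
    hopf_tensor_induction z with x c
    simp [T, convAct, lTensor]
  rw [hsandwich, ← hconvAct]
  exact congrArg T (LinearMap.congr_fun hδ.symm a)

lemma convRight_convPush_includeRight (χ : WithConv (C →ₗ[R] D')) :
    convRight (convPush (includeRight : D' →ₐ[R] D ⊗[R] D') χ) =
      convPush (Module.End.lTensorAlgHom R D' D) (convRight χ) := by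
  ext c d y
  exact (Algebra.TensorProduct.tmul_mul_tmul d 1 y (χ c)).trans (by rw [mul_one]; rfl)

lemma convLeft_convPush_includeRight (χ : WithConv (C →ₗ[R] D')) :
    convLeft (convPush (includeRight : D' →ₐ[R] D ⊗[R] D') χ) =
      convPush (Module.End.lTensorAlgHom R D' D) (convLeft χ) := by
  ext c d y
  exact (Algebra.TensorProduct.tmul_mul_tmul 1 d (χ c) y).trans (by rw [one_mul]; rfl)

lemma convSandwich_convPush_includeLeft (ψ φ : WithConv (C →ₗ[R] D)) :
    convSandwich (convPush (includeLeft : D →ₐ[R] D ⊗[R] D') ψ) (convPush includeLeft φ) =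
      convPush (Module.End.rTensorAlgHom R D D') (convSandwich ψ φ) := by
  have hright : convRight (convPush (includeLeft : D →ₐ[R] D ⊗[R] D') ψ) =
      convPush (Module.End.rTensorAlgHom R D D') (convRight ψ) := by
    ext c d y
    exact (Algebra.TensorProduct.tmul_mul_tmul d (ψ c) y 1).trans (by rw [mul_one]; rfl)
  have hleft : convLeft (convPush (includeLeft : D →ₐ[R] D ⊗[R] D') φ) =
      convPush (Module.End.rTensorAlgHom R D D') (convLeft φ) := by
    ext c d y
    exact (Algebra.TensorProduct.tmul_mul_tmul (φ c) d 1 y).trans (by rw [one_mul]; rfl)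
  rw [convSandwich, hright, hleft, ← map_mul, convSandwich]

variable {V : Type*} [AddCommMonoid V] [Module R V]

lemma comp_convMul_congr {π : D →ₗ[R] V} {X Y : WithConv (C →ₗ[R] Module.End R D)}
    (h : ∀ c, π ∘ₗ X c = π ∘ₗ Y c) (Z : WithConv (C →ₗ[R] Module.End R D)) (c : C) :
    π ∘ₗ (X * Z) c = π ∘ₗ (Y * Z) c := by
  ext a
  simpa [(ℛ R c).convMul_apply] using
    Finset.sum_congr rfl fun i _ ↦ LinearMap.congr_fun (h _) _

lemma convSandwich_slide {π : D →ₗ[R] V} {ψ φ U : WithConv (C →ₗ[R] D)}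
    (hU : ∀ c x, π (U c * x) = π (x * U c)) (c : C) (a : D) :
    π (convSandwich ψ (U * φ) c a) = π (convSandwich (ψ * U) φ c a) := by
  have hslide (c : C) : π ∘ₗ (convRight ψ * convLeft U) c = π ∘ₗ convRight (ψ * U) c := by
    ext a
    simp [(ℛ R c).convMul_apply, hU, Finset.mul_sum, mul_assoc]
  rw [convSandwich, convLeft_mul, ← mul_assoc]
  exact LinearMap.congr_fun (comp_convMul_congr hslide (convLeft φ) c) a

end Sandwich

section ComoduleAlgebra

open Algebra.TensorProduct (includeLeft includeRight)

lemma commute_one_tmul_tmul_one (x : D') (d : D) :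
    Commute ((1 : D) ⊗ₜ[R] x) (d ⊗ₜ[R] (1 : D')) := by
  simp [Commute, SemiconjBy]

variable {L : Type*} [Semiring L] [Bialgebra R L]

lemma convMul_apply_one (φ ψ : WithConv (L →ₗ[R] D)) : (φ * ψ) 1 = φ 1 * ψ 1 := by
  simp [Algebra.TensorProduct.one_def]

variable (D L) in
/-- The map `x ↦ 1 ⊗ x` in the convolution algebra of maps `L → D ⊗ L`. -/
def convInclude : WithConv (L →ₗ[R] D ⊗[R] L) :=
  toConv (includeRight : L →ₐ[R] D ⊗[R] L).toLinearMap

lemma convFst_mul_convSnd_convInclude :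
    convFst L (convInclude (R := R) D L) * convSnd L (convInclude D L) =
      convPull (Bialgebra.mulCoalgHom R L) (convInclude D L) := by
  refine ofConv_injective (TensorProduct.ext' fun x y ↦ ?_)
  exact (convFst_mul_convSnd_tmul _ _ x y).trans (by simp [convInclude])

lemma convAct_includeLeft_convInclude {V : Type*} [AddCommMonoid V] [Module R V]
    (δ : V →ₗ[R] V ⊗[R] L) (u : V →ₗ[R] D) :
    convAct δ ((includeLeft : D →ₐ[R] D ⊗[R] L).toLinearMap ∘ₗ u) (convInclude D L) =
      rTensor L u ∘ₗ δ := by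
  ext v
  simp only [convAct, comp_apply]
  hopf_tensor_induction δ v with x y
  simp [convInclude]

/-- The coinvariants `{b | ρ b = b ⊗ 1}` of a comodule algebra. -/
def coinvariants (ρ : D →ₐ[R] D ⊗[R] L) : Subalgebra R D := AlgHom.equalizer ρ includeLeft

lemma mem_coinvariants {ρ : D →ₐ[R] D ⊗[R] L} {b : D} :
    b ∈ coinvariants ρ ↔ ρ b = b ⊗ₜ[R] 1 := Iff.rfl

/-- A linear map `π` on a comodule algebra that does not distinguish `b a` from `a b` when `b` is
coinvariant, i.e. one that factors through the quotient by the commutators with coinvariants. -/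
def IsCoinvariantTrace {V : Type*} [AddCommMonoid V] [Module R V] (ρ : D →ₐ[R] D ⊗[R] L)
    (π : D →ₗ[R] V) : Prop :=
  ∀ b ∈ coinvariants ρ, ∀ a, π (b * a) = π (a * b)

lemma IsCoinvariantTrace.rTensor_coaction_mul_comm {V : Type*} [AddCommMonoid V] [Module R V]
    {ρ : D →ₐ[R] D ⊗[R] L} {π : D →ₗ[R] V} (hπ : IsCoinvariantTrace ρ π)
    {b : D} (hb : b ∈ coinvariants ρ) (a : D) :
    rTensor L π (ρ (b * a)) = rTensor L π (ρ (a * b)) := by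
  rw [map_mul ρ, map_mul ρ, mem_coinvariants.1 hb]
  hopf_tensor_induction ρ a with x y
  simp [hπ b hb]

/-- `F` is a right comodule map with convolution inverse `G`. -/
structure IsCleaving (ρ : D →ₐ[R] D ⊗[R] L) (F G : WithConv (L →ₗ[R] D)) : Prop where
  colinear : ρ.toLinearMap ∘ₗ F.ofConv = rTensor L F.ofConv ∘ₗ comul
  mul_inv : F * G = 1
  inv_mul : G * F = 1

namespace IsCleaving

variable {ρ : D →ₐ[R] D ⊗[R] L} {F G : WithConv (L →ₗ[R] D)}

lemma convPush_eq (h : IsCleaving ρ F G) :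
    convPush ρ F = convPush includeLeft F * convInclude D L :=
  ofConv_injective (h.colinear.trans (convAct_includeLeft_convInclude comul F.ofConv).symm)

lemma conj_mem_coinvariants (h : IsCleaving ρ F G) {b : D} (hb : b ∈ coinvariants ρ) (x : L) :
    (F * convConst R L b * G) x ∈ coinvariants ρ := by
  have hcomm : Commute (convInclude D L) (convConst R L (b ⊗ₜ[R] 1)) :=
    commute_convConst fun y ↦ commute_one_tmul_tmul_one y b
  have hFb : convPush ρ (F * convConst R L b) =
      convPush includeLeft (F * convConst R L b) * convInclude D L :=
    calc convPush ρ (F * convConst R L b)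
        = convPush includeLeft F * (convInclude D L * convConst R L (b ⊗ₜ[R] 1)) := by
          rw [map_mul, h.convPush_eq, convPush_convConst, mem_coinvariants.1 hb, mul_assoc]
      _ = convPush includeLeft F * convConst R L (b ⊗ₜ[R] 1) * convInclude D L := by
          rw [hcomm.eq, mul_assoc]
      _ = convPush includeLeft (F * convConst R L b) * convInclude D L := by
          rw [map_mul, convPush_convConst]; rfl
  exact LinearMap.congr_fun
    (congrArg ofConv (convPush_mul_inv_eq h.convPush_eq h.mul_inv h.inv_mul hFb)) x

lemma convAct_mem_coinvariants (h : IsCleaving ρ F G)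
    (hρ : (TensorProduct.assoc R D L L).toLinearMap ∘ₗ rTensor L ρ.toLinearMap ∘ₗ ρ.toLinearMap =
      lTensor D comul ∘ₗ ρ.toLinearMap) (a : D) :
    convAct ρ.toLinearMap LinearMap.id G a ∈ coinvariants ρ := by
  refine LinearMap.congr_fun
    (algHom_comp_convAct_inv_eq hρ h.convPush_eq h.mul_inv h.inv_mul ?_) a
  rw [convAct_includeLeft_convInclude, rTensor_id]; rfl

lemma cocycle_mem_coinvariants (h : IsCleaving ρ F G) (z : L ⊗[R] L) :
    (convFst L F * convSnd L F * convPull (Bialgebra.mulCoalgHom R L) G) z ∈ coinvariants ρ := by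
  let mult := Bialgebra.mulCoalgHom R L
  let ι : D →ₐ[R] D ⊗[R] L := includeLeft
  have hcomm : Commute (convFst L (convInclude D L)) (convSnd L (convPush ι F)) :=
    commute_convFst_convSnd fun x y ↦ commute_one_tmul_tmul_one x (F y)
  have hFF : convPush ρ (convFst L F * convSnd L F) =
      convPush ι (convFst L F * convSnd L F) * convPull mult (convInclude D L) :=
    calc convPush ρ (convFst L F * convSnd L F)
        = convFst L (convPush ι F * convInclude D L) *
            convSnd L (convPush ι F * convInclude D L) := by
          rw [← h.convPush_eq, map_mul]; rfl
      _ = convFst L (convPush ι F) * convSnd L (convPush ι F) *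
            (convFst L (convInclude D L) * convSnd L (convInclude D L)) := by
          simp only [map_mul, hcomm.mul_mul_mul_comm]
      _ = convPush ι (convFst L F * convSnd L F) * convPull mult (convInclude D L) := by
          rw [convFst_mul_convSnd_convInclude, map_mul]; rfl
  have hmult : convPush ρ (convPull mult F) =
      convPush ι (convPull mult F) * convPull mult (convInclude D L) := by
    rw [convPush_convPull, h.convPush_eq, map_mul]; rfl
  have hFG : convPull mult F * convPull mult G = 1 := by rw [← map_mul, h.mul_inv, map_one]
  have hGF : convPull mult G * convPull mult F = 1 := by rw [← map_mul, h.inv_mul, map_one]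
  exact LinearMap.congr_fun (congrArg ofConv (convPush_mul_inv_eq hmult hFG hGF hFF)) z

section Trace

variable {V : Type*} [AddCommMonoid V] [Module R V] {π : D →ₗ[R] V}

lemma trace_convSandwich_mul_comm (h : IsCleaving ρ F G) (hπ : IsCoinvariantTrace ρ π)
    {b : D} (hb : b ∈ coinvariants ρ) (x : L) (a : D) :
    π (convSandwich G F x (b * a)) = π (convSandwich G F x (a * b)) :=
  calc π (convSandwich G F x (b * a))
      = π (convSandwich G (F * convConst R L b * G * F) x a) := by
        rw [mul_assoc _ G F, h.inv_mul, mul_one, convSandwich_mul_convConst]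
    _ = π (convSandwich (G * (F * convConst R L b * G)) F x a) :=
        convSandwich_slide (fun y d ↦ hπ _ (h.conj_mem_coinvariants hb y) d) x a
    _ = π (convSandwich G F x (a * b)) := by
        rw [← mul_assoc, ← mul_assoc, h.inv_mul, one_mul, convSandwich_convConst_mul]

lemma trace_convSandwich_mul (h : IsCleaving ρ F G) (hπ : IsCoinvariantTrace ρ π)
    (x y : L) (a : D) :
    π (convSandwich G F x (convSandwich G F y a)) = π (convSandwich G F (x * y) a) := by
  let mult := Bialgebra.mulCoalgHom R L
  let σ := convFst L F * convSnd L F * convPull mult G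
  have hFst : convFst L G * convFst L F = 1 := by rw [← map_mul, h.inv_mul, map_one]
  have hSnd : convSnd L G * convSnd L F = 1 := by rw [← map_mul, h.inv_mul, map_one]
  have hσF : convFst L F * convSnd L F = σ * convPull mult F := by
    rw [mul_assoc, ← map_mul, h.inv_mul, map_one, mul_one]
  have hGσ : convSnd L G * convFst L G * σ = convPull mult G := by
    simp only [σ, mul_assoc]
    rw [← mul_assoc (convFst L G), hFst, one_mul, ← mul_assoc, hSnd, one_mul]
  calc π (convSandwich G F x (convSandwich G F y a))
      = π (convSandwich (convSnd L G * convFst L G) (σ * convPull mult F) (x ⊗ₜ[R] y) a) := by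
        rw [← hσF, convSandwich_convFst_convSnd_tmul]
    _ = π (convSandwich (convPull mult G) (convPull mult F) (x ⊗ₜ[R] y) a) := by
        rw [convSandwich_slide (fun z d ↦ hπ _ (h.cocycle_mem_coinvariants z) d), hGσ]
    _ = π (convSandwich G F (x * y) a) := by rw [convSandwich_convPull]; rfl

lemma trace_convSandwich_one (h : IsCleaving ρ F G) (hπ : IsCoinvariantTrace ρ π) (a : D) :
    π (convSandwich G F 1 a) = π a := by
  have hF : F 1 ∈ coinvariants ρ :=
    (LinearMap.congr_fun h.colinear 1).trans (by simp [Algebra.TensorProduct.one_def])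
  have hGF : G 1 * F 1 = 1 := by
    simpa only [h.inv_mul, convOne_apply, map_one, Bialgebra.counit_one] using
      (convMul_apply_one G F).symm
  calc π (convSandwich G F 1 a) = π (F 1 * (a * G 1)) := by
        rw [convSandwich, convMul_apply_one, Module.End.mul_apply, convLeft_apply,
          convRight_apply, mul_assoc]
    _ = π a := by rw [hπ _ hF, mul_assoc, hGF, mul_one]

lemma trace_convSandwich_coaction (h : IsCleaving ρ F G) (hπ : IsCoinvariantTrace ρ π)
    (hassoc : (TensorProduct.assoc R D L L).toLinearMap ∘ₗ rTensor L ρ.toLinearMap ∘ₗ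
      ρ.toLinearMap = lTensor D comul ∘ₗ ρ.toLinearMap)
    (hcounit : (TensorProduct.rid R D).toLinearMap ∘ₗ lTensor D counit ∘ₗ ρ.toLinearMap =
      LinearMap.id) (a : D) :
    π (TensorProduct.lift (convSandwich G F).ofConv (TensorProduct.comm R D L (ρ a))) = π a := by
  let E := convAct ρ.toLinearMap LinearMap.id G
  have hE : convAct ρ.toLinearMap E F = LinearMap.id := by
    rw [convAct_convAct hassoc, h.inv_mul, convAct_one hcounit]
  have htrace (z : D ⊗[R] L) :
      π (mul' R D (TensorProduct.comm R D D (TensorProduct.map E F.ofConv z))) =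
        π (mul' R D (TensorProduct.map E F.ofConv z)) := by
    hopf_tensor_induction z with x y
    simpa using (hπ _ (h.convAct_mem_coinvariants hassoc x) (F y)).symm
  calc π (TensorProduct.lift (convSandwich G F).ofConv (TensorProduct.comm R D L (ρ a)))
      = π (convAct ρ.toLinearMap E F a) := by
        rw [← AlgHom.toLinearMap_apply ρ, lift_convSandwich_comm_coaction hassoc, htrace]; rfl
    _ = π a := by rw [hE, LinearMap.id_apply]

end Trace

end IsCleaving

end ComoduleAlgebra

section AntiYetterDrinfeld

open Algebra.TensorProduct (includeLeft includeRight)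

variable {L V : Type*} [Semiring L] [HopfAlgebra R L] [AddCommMonoid V] [Module R V]

/-- For an action `X` of `L` on `V`, the map `x ↦ (v ⊗ y ↦ X(x₂) v ⊗ x₃ y S(x₁))`. The coaction of
an anti-Yetter–Drinfeld module intertwines it with `X`. -/
def aydTensor (X : WithConv (L →ₗ[R] Module.End R V)) :
    WithConv (L →ₗ[R] Module.End R (V ⊗[R] L)) :=
  convPush (Module.End.lTensorAlgHom R L V) (convRight (toConv (HopfAlgebra.antipode R))) *
    convPush (Module.End.rTensorAlgHom R V L) X *
    convPush (Module.End.lTensorAlgHom R L V) (convLeft (toConv LinearMap.id))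

namespace IsCleaving

variable {ρ : D →ₐ[R] D ⊗[R] L} {F G : WithConv (L →ₗ[R] D)}

lemma convPush_inv_eq (h : IsCleaving ρ F G) :
    convPush ρ G =
      convPush includeRight (toConv (HopfAlgebra.antipode R)) * convPush includeLeft G := by
  have hS : convPush includeRight (toConv (HopfAlgebra.antipode R)) * convInclude D L = 1 :=
    calc _ = convPush (includeRight : L →ₐ[R] D ⊗[R] L)
          (toConv (HopfAlgebra.antipode R) * toConv LinearMap.id) := (map_mul _ _ _).symm
      _ = 1 := by rw [antipode_mul_id, map_one]
  rw [← mul_convPush_inv h.convPush_eq h.mul_inv h.inv_mul, ← mul_assoc, hS, one_mul]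

lemma coaction_convSandwich (h : IsCleaving ρ F G) (x : L) (a : D) :
    ρ (convSandwich G F x a) = aydTensor (convSandwich G F) x (ρ a) := by
  have hcomm (y z : L) : Commute (convPush (includeRight : L →ₐ[R] D ⊗[R] L)
      (toConv (HopfAlgebra.antipode R)) y) (convPush includeLeft G z) :=
    commute_one_tmul_tmul_one _ _
  rw [algHom_convSandwich_apply, h.convPush_eq, h.convPush_inv_eq, convSandwich,
    convRight_mul_of_commute hcomm, convLeft_mul, convRight_convPush_includeRight,
    show convInclude D L = convPush includeRight (toConv LinearMap.id) from rfl,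
    convLeft_convPush_includeRight, aydTensor, ← convSandwich_convPush_includeLeft, convSandwich]
  simp only [mul_assoc]

end IsCleaving

end AntiYetterDrinfeld

end Convolution

open WithConv Coalgebra

section LeftRightSAYD

variable {N : Type*} [AddCommGroup N] [Module k N]

lemma intActL_eq_lift_convSandwich (f g : H →ₗ[k] A) :
    intActL Δ f g = TensorProduct.lift (convSandwich (toConv g) (toConv f)).ofConv := by
  ext x a
  simp [intActL, sandwich, ← (ℛ k x).eq, convSandwich_apply _ _ (ℛ k x), tmul_sum]

lemma aydLRRhs_tmul (act : H ⊗[k] M →ₗ[k] M) (ρM : M →ₗ[k] M ⊗[k] H) (x : H) (m : M) :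
    aydLRRhs mulH Δ 𝒮 act ρM (x ⊗ₜ[k] m) =
      aydTensor (toConv (TensorProduct.curry act)) x (ρM m) := by
  rw [aydTensor, mul_assoc, (ℛ k x).convMul_apply, LinearMap.sum_apply]
  simp only [aydLRRhs, comp_apply, map_tmul, ← (ℛ k x).eq, map_sum, sum_tmul]
  refine Finset.sum_congr rfl fun i _ ↦ ?_
  rw [(ℛ k ((ℛ k x).right i)).convMul_apply, Finset.mul_sum, LinearMap.sum_apply]
  simp only [lTensor_tmul, ← (ℛ k ((ℛ k x).right i)).eq, map_sum, tmul_sum, sum_tmul]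
  refine Finset.sum_congr rfl fun j _ ↦ ?_
  hopf_tensor_induction ρM m with m' w
  refine Eq.trans ?_ (rfl : act ((ℛ k ((ℛ k x).right i)).left j ⊗ₜ[k] m') ⊗ₜ[k]
    ((ℛ k ((ℛ k x).right i)).right j * w * 𝒮 ((ℛ k x).left i)) = _)
  simp [mul_assoc]

lemma aydLRRhs_natural {q : M →ₗ[k] N} {actM : H ⊗[k] M →ₗ[k] M} {ρM : M →ₗ[k] M ⊗[k] H}
    {actN : H ⊗[k] N →ₗ[k] N} {ρN : N →ₗ[k] N ⊗[k] H}
    (hact : actN ∘ₗ lTensor H q = q ∘ₗ actM) (hρ : ρN ∘ₗ q = rTensor H q ∘ₗ ρM) :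
    aydLRRhs mulH Δ 𝒮 actN ρN ∘ₗ lTensor H q = rTensor H q ∘ₗ aydLRRhs mulH Δ 𝒮 actM ρM := by
  have hactq (x : H) (m : M) : actN (x ⊗ₜ[k] q m) = q (actM (x ⊗ₜ[k] m)) :=
    LinearMap.congr_fun hact (x ⊗ₜ[k] m)
  refine TensorProduct.ext' fun x m ↦ ?_
  have hρm : ρN (q m) = rTensor H q (ρM m) := LinearMap.congr_fun hρ m
  simp only [aydLRRhs, comp_apply, lTensor_tmul, map_tmul, hρm]
  generalize TensorProduct.assoc k H H H _ = w
  hopf_tensor_induction w with y z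
  hopf_tensor_induction ρM m with m' y'
  simp [hactq]

/-- Left-right stable anti-Yetter–Drinfeld modules over `H`. -/
structure IsLeftRightSAYD (act : H ⊗[k] M →ₗ[k] M) (ρM : M →ₗ[k] M ⊗[k] H) : Prop where
  act_mul : act ∘ₗ rTensor M mulH =
    act ∘ₗ lTensor H act ∘ₗ (TensorProduct.assoc k H H M).toLinearMap
  act_one : ∀ m, act ((1 : H) ⊗ₜ[k] m) = m
  coassoc : (TensorProduct.assoc k M H H).toLinearMap ∘ₗ rTensor H ρM ∘ₗ ρM = lTensor M Δ ∘ₗ ρM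
  counit : (TensorProduct.rid k M).toLinearMap ∘ₗ lTensor M εH ∘ₗ ρM = LinearMap.id
  ayd : ρM ∘ₗ act = aydLRRhs mulH Δ 𝒮 act ρM
  stable : act ∘ₗ (TensorProduct.comm k M H).toLinearMap ∘ₗ ρM = LinearMap.id

lemma coassoc_of_surjective {R C V W : Type*} [CommSemiring R] [AddCommMonoid C] [Module R C]
    [CoalgebraStruct R C] [AddCommMonoid V] [Module R V] [AddCommMonoid W] [Module R W]
    {q : V →ₗ[R] W} (hq : Function.Surjective q)
    {ρV : V →ₗ[R] V ⊗[R] C} {ρW : W →ₗ[R] W ⊗[R] C} (hρ : ρW ∘ₗ q = rTensor C q ∘ₗ ρV)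
    (hassoc : (TensorProduct.assoc R V C C).toLinearMap ∘ₗ rTensor C ρV ∘ₗ ρV =
      lTensor V comul ∘ₗ ρV) :
    (TensorProduct.assoc R W C C).toLinearMap ∘ₗ rTensor C ρW ∘ₗ ρW = lTensor W comul ∘ₗ ρW := by
  have hρq (v : V) : ρW (q v) = rTensor C q (ρV v) := LinearMap.congr_fun hρ v
  have hassocq (z : V ⊗[R] C) : TensorProduct.assoc R W C C (rTensor C ρW (rTensor C q z)) =
      rTensor (C ⊗[R] C) q (TensorProduct.assoc R V C C (rTensor C ρV z)) := by
    hopf_tensor_induction z with v x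
    simp only [rTensor_tmul, hρq]
    hopf_tensor_induction ρV v with v' y
    simp
  ext w
  obtain ⟨v, rfl⟩ := hq w
  calc TensorProduct.assoc R W C C (rTensor C ρW (ρW (q v)))
      = rTensor (C ⊗[R] C) q (lTensor V comul (ρV v)) := by
        rw [hρq, hassocq]
        exact congrArg _ (LinearMap.congr_fun hassoc v)
    _ = lTensor W comul (ρW (q v)) := by
        rw [hρq, ← comp_apply (rTensor _ q), rTensor_comp_lTensor, ← lTensor_comp_rTensor]; rfl

lemma counit_of_surjective {R C V W : Type*} [CommSemiring R] [AddCommMonoid C] [Module R C]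
    [CoalgebraStruct R C] [AddCommMonoid V] [Module R V] [AddCommMonoid W] [Module R W]
    {q : V →ₗ[R] W} (hq : Function.Surjective q)
    {ρV : V →ₗ[R] V ⊗[R] C} {ρW : W →ₗ[R] W ⊗[R] C} (hρ : ρW ∘ₗ q = rTensor C q ∘ₗ ρV)
    (hcounit : (TensorProduct.rid R V).toLinearMap ∘ₗ lTensor V counit ∘ₗ ρV = LinearMap.id) :
    (TensorProduct.rid R W).toLinearMap ∘ₗ lTensor W counit ∘ₗ ρW = LinearMap.id := by
  ext w
  obtain ⟨v, rfl⟩ := hq w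
  calc TensorProduct.rid R W (lTensor W counit (ρW (q v)))
      = q (TensorProduct.rid R V (lTensor V counit (ρV v))) := by
        rw [show ρW (q v) = rTensor C q (ρV v) from LinearMap.congr_fun hρ v]
        hopf_tensor_induction ρV v with v' x
        simp
    _ = q v := congrArg q (LinearMap.congr_fun hcounit v)

lemma IsLeftRightSAYD.of_surjective {q : M →ₗ[k] N} (hq : Function.Surjective q)
    {actM : H ⊗[k] M →ₗ[k] M} {ρM : M →ₗ[k] M ⊗[k] H}
    {actN : H ⊗[k] N →ₗ[k] N} {ρN : N →ₗ[k] N ⊗[k] H}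
    (hact : actN ∘ₗ lTensor H q = q ∘ₗ actM) (hρ : ρN ∘ₗ q = rTensor H q ∘ₗ ρM)
    (hmul : ∀ x y m, q (actM ((x * y) ⊗ₜ[k] m)) = q (actM (x ⊗ₜ[k] actM (y ⊗ₜ[k] m))))
    (hone : ∀ m, q (actM ((1 : H) ⊗ₜ[k] m)) = q m)
    (hassoc : (TensorProduct.assoc k M H H).toLinearMap ∘ₗ rTensor H ρM ∘ₗ ρM = lTensor M Δ ∘ₗ ρM)
    (hcounit : (TensorProduct.rid k M).toLinearMap ∘ₗ lTensor M εH ∘ₗ ρM = LinearMap.id)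
    (hayd : ρM ∘ₗ actM = aydLRRhs mulH Δ 𝒮 actM ρM)
    (hstable : ∀ m, q (actM (TensorProduct.comm k M H (ρM m))) = q m) :
    IsLeftRightSAYD actN ρN := by
  have hactq (x : H) (m : M) : actN (x ⊗ₜ[k] q m) = q (actM (x ⊗ₜ[k] m)) :=
    LinearMap.congr_fun hact (x ⊗ₜ[k] m)
  have hρq (m : M) : ρN (q m) = rTensor H q (ρM m) := LinearMap.congr_fun hρ m
  constructor
  case act_mul =>
    refine TensorProduct.ext_threefold fun x y n ↦ ?_
    obtain ⟨m, rfl⟩ := hq n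
    simp [hactq, hmul]
  case act_one =>
    intro n
    obtain ⟨m, rfl⟩ := hq n
    rw [hactq, hone]
  case coassoc => exact coassoc_of_surjective hq hρ hassoc
  case counit => exact counit_of_surjective hq hρ hcounit
  case ayd =>
    refine TensorProduct.ext' fun x n ↦ ?_
    obtain ⟨m, rfl⟩ := hq n
    calc ρN (actN (x ⊗ₜ[k] q m)) = rTensor H q (ρM (actM (x ⊗ₜ[k] m))) := by rw [hactq, hρq]
      _ = rTensor H q (aydLRRhs mulH Δ 𝒮 actM ρM (x ⊗ₜ[k] m)) :=
        congrArg _ (LinearMap.congr_fun hayd _)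
      _ = aydLRRhs mulH Δ 𝒮 actN ρN (x ⊗ₜ[k] q m) :=
        (LinearMap.congr_fun (aydLRRhs_natural hact hρ) (x ⊗ₜ[k] m)).symm
  case stable =>
    ext n
    obtain ⟨m, rfl⟩ := hq n
    calc actN (TensorProduct.comm k N H (ρN (q m)))
        = q (actM (TensorProduct.comm k M H (ρM m))) := by
          rw [hρq]
          hopf_tensor_induction ρM m with m' y
          simp [hactq]
      _ = q m := hstable m

lemma exists_comp_lTensor_mkQ_eq {R X V : Type*} [CommRing R] [AddCommMonoid X] [Module R X]
    [AddCommGroup V] [Module R V] {act : X ⊗[R] V →ₗ[R] V} {P : Submodule R V}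
    (hP : ∀ x, P ≤ LinearMap.ker (P.mkQ ∘ₗ TensorProduct.curry act x)) :
    ∃ actQ : X ⊗[R] (V ⧸ P) →ₗ[R] V ⧸ P, actQ ∘ₗ lTensor X P.mkQ = P.mkQ ∘ₗ act := by
  have hflip : P ≤ LinearMap.ker (TensorProduct.curry (P.mkQ ∘ₗ act)).flip := fun v hv ↦ by
    ext x; exact hP x hv
  refine ⟨TensorProduct.lift (P.liftQ _ hflip).flip, ?_⟩
  ext x v; rfl

lemma commSub_le_ker {ρA : A →ₗ[k] A ⊗[k] H} {φ : A →ₗ[k] M}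
    (hφ : ∀ a, ∀ b ∈ coinv ρA, φ (b * a) = φ (a * b)) : commSub ρA ≤ LinearMap.ker φ := by
  refine Submodule.span_le.2 ?_
  rintro _ ⟨a, b, hb, rfl⟩
  simp [hφ a b hb]

lemma isCoinvariantTrace_mkQ (ρ : A →ₐ[k] A ⊗[k] H) :
    IsCoinvariantTrace ρ (commSub ρ.toLinearMap).mkQ := fun b hb a ↦
  ((Submodule.Quotient.eq (commSub ρ.toLinearMap)).2 (Submodule.subset_span ⟨a, b, hb, rfl⟩)).symm

end LeftRightSAYD

theorem cleft_extension_gives_SAYD_on_quotient_general (ρ : A →ₐ[k] A ⊗[k] H)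
    (hassoc : (TensorProduct.assoc k A H H).toLinearMap ∘ₗ rTensor H ρ.toLinearMap ∘ₗ
      ρ.toLinearMap = lTensor A Δ ∘ₗ ρ.toLinearMap)
    (hcounit : (TensorProduct.rid k A).toLinearMap ∘ₗ lTensor A εH ∘ₗ ρ.toLinearMap =
      LinearMap.id)
    {F G : WithConv (H →ₗ[k] A)} (h : IsCleaving ρ F G) :
    ∃ (act : H ⊗[k] (A ⧸ commSub ρ.toLinearMap) →ₗ[k] A ⧸ commSub ρ.toLinearMap)
      (ρQ : A ⧸ commSub ρ.toLinearMap →ₗ[k] (A ⧸ commSub ρ.toLinearMap) ⊗[k] H),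
      act ∘ₗ lTensor H (commSub ρ.toLinearMap).mkQ =
        (commSub ρ.toLinearMap).mkQ ∘ₗ intActL Δ F.ofConv G.ofConv ∧
      ρQ ∘ₗ (commSub ρ.toLinearMap).mkQ =
        rTensor H (commSub ρ.toLinearMap).mkQ ∘ₗ ρ.toLinearMap ∧
      IsLeftRightSAYD act ρQ := by
  have hπ := isCoinvariantTrace_mkQ ρ
  have hact (x : H) (a : A) : intActL Δ F.ofConv G.ofConv (x ⊗ₜ[k] a) = convSandwich G F x a := by
    rw [intActL_eq_lift_convSandwich]; rfl
  obtain ⟨act, hactQ⟩ := exists_comp_lTensor_mkQ_eq (act := intActL Δ F.ofConv G.ofConv)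
    (P := commSub ρ.toLinearMap) fun x ↦ commSub_le_ker fun a b hb ↦ by
      simpa only [comp_apply, TensorProduct.curry_apply, hact] using
        h.trace_convSandwich_mul_comm hπ hb x a
  let ρQ := (commSub ρ.toLinearMap).liftQ (rTensor H (commSub ρ.toLinearMap).mkQ ∘ₗ ρ.toLinearMap)
    (commSub_le_ker fun a b hb ↦ hπ.rTensor_coaction_mul_comm hb a)
  have hρQ : ρQ ∘ₗ (commSub ρ.toLinearMap).mkQ =
      rTensor H (commSub ρ.toLinearMap).mkQ ∘ₗ ρ.toLinearMap := Submodule.liftQ_mkQ _ _ _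
  refine ⟨act, ρQ, hactQ, hρQ, IsLeftRightSAYD.of_surjective (Submodule.mkQ_surjective _)
    hactQ hρQ ?_ ?_ hassoc hcounit ?_ ?_⟩
  · intro x y a
    rw [hact, hact, hact, h.trace_convSandwich_mul hπ]
  · intro a
    rw [hact, h.trace_convSandwich_one hπ]
  · refine TensorProduct.ext' fun x a ↦ ?_
    rw [comp_apply, hact, aydLRRhs_tmul, intActL_eq_lift_convSandwich]
    exact h.coaction_convSandwich x a
  · intro a
    rw [intActL_eq_lift_convSandwich]
    exact h.trace_convSandwich_coaction hπ hassoc hcounit a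

/-- For a cleft Hopf Galois extension `A(B)^H` with convolution invertible
total integral `f`, the quotient `A_B = A ⧸ [A,B]` with the induced coaction and the left action
`h · a = f h⑵ * a * f⁻¹ h⑴` is a left-right **stable** anti-Yetter-Drinfeld module over `H`. -/
theorem cleft_extension_gives_SAYD_on_quotient
    (Sinv : H →ₗ[k] H) (hS₁ : Sinv ∘ₗ 𝒮 = LinearMap.id) (hS₂ : 𝒮 ∘ₗ Sinv = LinearMap.id)
    (ρA : A →ₗ[k] A ⊗[k] H)
    (hρ_coassoc : (TensorProduct.assoc k A H H).toLinearMap ∘ₗ rTensor H ρA ∘ₗ ρA =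
      lTensor A Δ ∘ₗ ρA)
    (hρ_counit : (TensorProduct.rid k A).toLinearMap ∘ₗ lTensor A εH ∘ₗ ρA = LinearMap.id)
    (hρ_one : ρA 1 = (1 : A) ⊗ₜ[k] (1 : H))
    (hρ_mul : ∀ x y : A, ρA (x * y) = ρA x * ρA y)
    (hGal_surj : Function.Surjective (canMap ρA))
    (hGal_ker : LinearMap.ker (canMap ρA) = galRel ρA)
    (f : H →ₗ[k] A) (hf_one : f 1 = 1)
    (hf_comod : ρA ∘ₗ f = rTensor H f ∘ₗ Δ)
    (fInv : H →ₗ[k] A)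
    (hconv₁ : mulA ∘ₗ TensorProduct.map fInv f ∘ₗ Δ = Algebra.linearMap k A ∘ₗ εH)
    (hconv₂ : mulA ∘ₗ TensorProduct.map f fInv ∘ₗ Δ = Algebra.linearMap k A ∘ₗ εH)
 :
    ∃ actQ : H ⊗[k] (A ⧸ commSub ρA) →ₗ[k] (A ⧸ commSub ρA),
    ∃ ρQ : (A ⧸ commSub ρA) →ₗ[k] (A ⧸ commSub ρA) ⊗[k] H,
      (actQ ∘ₗ lTensor H (commSub ρA).mkQ = (commSub ρA).mkQ ∘ₗ intActL Δ f fInv) ∧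
      (ρQ ∘ₗ (commSub ρA).mkQ = rTensor H (commSub ρA).mkQ ∘ₗ ρA) ∧
      (actQ ∘ₗ rTensor (A ⧸ commSub ρA) mulH =
      actQ ∘ₗ lTensor H (actQ) ∘ₗ (TensorProduct.assoc k H H (A ⧸ commSub ρA)).toLinearMap) ∧
      (∀ x : (A ⧸ commSub ρA), (actQ) ((1 : H) ⊗ₜ[k] x) = x) ∧
      ((TensorProduct.assoc k (A ⧸ commSub ρA) H H).toLinearMap ∘ₗ rTensor H (ρQ) ∘ₗ (ρQ) =
      lTensor (A ⧸ commSub ρA) Δ ∘ₗ (ρQ)) ∧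
      ((TensorProduct.rid k (A ⧸ commSub ρA)).toLinearMap ∘ₗ lTensor (A ⧸ commSub ρA) εH ∘ₗ (ρQ) = LinearMap.id) ∧
      (ρQ ∘ₗ actQ = aydLRRhs mulH Δ 𝒮 actQ ρQ) ∧
      (actQ ∘ₗ (TensorProduct.comm k (A ⧸ commSub ρA) H).toLinearMap ∘ₗ ρQ = LinearMap.id) := by
  obtain ⟨actQ, ρQ, hact, hρ, hQ⟩ := cleft_extension_gives_SAYD_on_quotient_general
    (AlgHom.ofLinearMap ρA hρ_one hρ_mul) hρ_coassoc hρ_counit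
    (F := toConv f) (G := toConv fInv)
    ⟨hf_comod, congrArg toConv hconv₂, congrArg toConv hconv₁⟩
  exact ⟨actQ, ρQ, hact, hρ, hQ.act_mul, hQ.act_one, hQ.coassoc, hQ.counit, hQ.ayd, hQ.stable⟩
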